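/- Let p be a real number with 0 < p < 1, let n ≥ 1 be an integer, and set m = ⌊(n+1)/2⌋. Then for every expanding search σ of the cycle C_n, p^{σ⁻¹(m)} + p^{σ⁻¹(n+1−m)} ≤ p^m + p^{n+1−m}. (This is the Hider's guarantee in Theorem 3: hiding equiprobably at vertices ⌊(n+1)/2⌋ and ⌈(n+1)/2⌉ = n+1−m caps the expected payoff at (p^{⌊(n+1)/2⌋} + p^{⌈(n+1)/2⌉})/2 against every expanding search.) -/

import Mathlib

/-- Adjacency in the cycle `C n` with vertex set `{0, 1, …, n}`:
edges `{j, j+1}` for `j = 0, …, n-1`, and the edge `{n, 0}`. -/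
def CycleAdj (n : ℕ) (u v : ℕ) : Prop :=
  v = u + 1 ∨ u = v + 1 ∨ (u = 0 ∧ v = n) ∨ (u = n ∧ v = 0)

/-- An expanding search of the cycle `C n`, encoded as a permutation of `Fin n`
(position `j` searches vertex `(σ j : ℕ) + 1 ∈ {1, …, n}`): every searched vertex
must be adjacent to the root `0` or to some previously searched vertex. -/
def IsExpandingSearch (n : ℕ) (σ : Equiv.Perm (Fin n)) : Prop :=
  ∀ j : Fin n, CycleAdj n ((σ j : ℕ) + 1) 0 ∨
    ∃ i : Fin n, i < j ∧ CycleAdj n ((σ j : ℕ) + 1) ((σ i : ℕ) + 1)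

/-!
A step along an edge of the cycle changes the distance to the root by at most one, so an expanding
search cannot reach a vertex at distance `d` before position `d`. Both vertices `m = ⌊(n+1)/2⌋` and
`n+1-m` are at distance `m`, so neither is searched before position `m`. If they differ then
`n+1-m = m+1`, and the later of the two is searched at position `m+1` at the earliest.
-/

/-- The graph distance from `v` to the root `0` in the cycle `C n`, in closed form. Only the values
at `v ≤ n + 1` are meaningful, where `n + 1` is read as the root again. -/
def rootDist (n v : ℕ) : ℕ :=
  min v (n + 1 - v)

theorem rootDist_eq_self {n v : ℕ} (hv : 2 * v ≤ n + 1) : rootDist n v = v := by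
  unfold rootDist
  omega

theorem rootDist_reflect (n v : ℕ) : rootDist n (n + 1 - v) = rootDist n v := by
  unfold rootDist
  omega

theorem CycleAdj.rootDist_le_add_one {n u v : ℕ} (h : CycleAdj n u v) :
    rootDist n u ≤ rootDist n v + 1 := by
  unfold CycleAdj at h
  unfold rootDist
  omega

theorem IsExpandingSearch.rootDist_apply_le {n : ℕ} {σ : Equiv.Perm (Fin n)}
    (hσ : IsExpandingSearch n σ) (j : Fin n) : rootDist n (σ j + 1) ≤ j + 1 := by
  induction j using WellFoundedLT.induction with
  | ind j ih =>
    rcases hσ j with hroot | ⟨i, hij, hadj⟩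
    · calc rootDist n (σ j + 1)
        _ ≤ rootDist n 0 + 1 := hroot.rootDist_le_add_one
        _ = 0 + 1 := by rw [rootDist_eq_self (by omega)]
        _ ≤ j + 1 := by omega
    · calc rootDist n (σ j + 1)
        _ ≤ rootDist n (σ i + 1) + 1 := hadj.rootDist_le_add_one
        _ ≤ (i + 1) + 1 := by gcongr; exact ih i hij
        _ ≤ j + 1 := by gcongr; exact hij

theorem IsExpandingSearch.rootDist_le_symm_apply {n : ℕ} {σ : Equiv.Perm (Fin n)}
    (hσ : IsExpandingSearch n σ) (v : Fin n) : rootDist n (v + 1) ≤ σ.symm v + 1 := by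
  simpa only [Equiv.apply_symm_apply] using hσ.rootDist_apply_le (σ.symm v)

theorem hider_guarantee_equal_probs_general {M : Type*} [AddCommMonoid M] [Preorder M]
    [IsOrderedAddMonoid M] {f : ℕ → M} (hf : Antitone f) {n : ℕ} {σ : Equiv.Perm (Fin n)}
    (hσ : IsExpandingSearch n σ) {u v : Fin n} (hu : (u : ℕ) + 1 = (n + 1) / 2)
    (hv : (v : ℕ) + 1 = n + 1 - (n + 1) / 2) :
    f (σ.symm u + 1) + f (σ.symm v + 1) ≤ f ((n + 1) / 2) + f (n + 1 - (n + 1) / 2) := by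
  have u_dist : rootDist n (u + 1) = (n + 1) / 2 := by
    rw [hu, rootDist_eq_self (by omega)]
  have v_dist : rootDist n (v + 1) = (n + 1) / 2 := by
    rw [hv, rootDist_reflect, rootDist_eq_self (by omega)]
  have u_late : (n + 1) / 2 ≤ σ.symm u + 1 := u_dist ▸ hσ.rootDist_le_symm_apply u
  have v_late : (n + 1) / 2 ≤ σ.symm v + 1 := v_dist ▸ hσ.rootDist_le_symm_apply v
  have max_late : n + 1 - (n + 1) / 2 ≤ max (σ.symm u + 1 : ℕ) (σ.symm v + 1) := by
    rcases eq_or_ne u v with rfl | huv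
    · omega
    · have : (σ.symm u : ℕ) ≠ σ.symm v := Fin.val_ne_of_ne (σ.symm.injective.ne huv)
      omega
  rw [← fn_min_add_fn_max f]
  exact add_le_add (hf (le_min u_late v_late)) (hf max_late)

/-- The Hider's guarantee in Theorem 3: with `m = ⌊(n+1)/2⌋`, for every expanding
search `σ` of `C n`, `p^(σ⁻¹ m) + p^(σ⁻¹ (n+1-m)) ≤ p^m + p^(n+1-m)`, where `σ⁻¹ v`
is the (1-indexed) position at which vertex `v` is searched. -/
theorem hider_guarantee_equal_probs (p : ℝ) (hp0 : 0 < p) (hp1 : p < 1)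
    (n : ℕ) (hn : 1 ≤ n) (σ : Equiv.Perm (Fin n)) (hσ : IsExpandingSearch n σ) :
    p ^ (((σ.symm ⟨(n + 1) / 2 - 1, by omega⟩ : Fin n) : ℕ) + 1) +
      p ^ (((σ.symm ⟨n - (n + 1) / 2, by omega⟩ : Fin n) : ℕ) + 1) ≤
    p ^ ((n + 1) / 2) + p ^ (n + 1 - (n + 1) / 2) :=
  hider_guarantee_equal_probs_general (pow_right_anti₀ hp0.le hp1.le) hσ
    (by dsimp only; omega) (by dsimp only; omega)
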